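/- Let κ : [a,b] → ℝ be continuous and u : [a,b] → [0,∞) continuous. Then the following are equivalent: (i) u'' + κu ≤ 0 in the distributional sense, i.e. ∫ₐᵇ φ''(t)u(t) dt ≤ -∫ₐᵇ φ(t)κ(t)u(t) dt for all nonnegative φ ∈ C_c^∞((a,b)); (ii) for every constant speed geodesic γ : [0,1] → [a,b] with speed θ, u(γ(t)) ≥ (1-t)u(γ(0)) + t u(γ(1)) + ∫₀¹ g(t,s) κ(γ(s)) θ² u(γ(s)) ds, where g is the Green function of [0,1]. -/

import Mathlib

open Set

/-! Let `F'' = f`. Two integrations by parts, once against a test function and once against the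
Green function of `[0, 1]`, turn both `u'' + f ≤ 0` and the Green inequality into statements about
`v = u + F`: that `v'' ≤ 0` in the sense of distributions, and that `v` is concave.

To compare these two, mollify. The second derivative at `x` of `ρ ⋆ v` is the pairing of `v` with
the second derivative of the test function `s ↦ ρ (x - s)`. If `v'' ≤ 0`, then every mollification
of `v` is therefore concave, and so is their limit `v`. Conversely, if `v` is concave, so is
`ρ ⋆ v`, and its second derivative at `0` for `ρ s = φ (-s)` is the pairing of `v` with `φ''`. -/

open Filter Function MeasureTheory Topology
open ContinuousLinearMap (lsmul)
open scoped Convolution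

theorem concaveOn_iff_forall_lineSegment_le {s : Set ℝ} (hs : Convex ℝ s) {v : ℝ → ℝ} :
    ConcaveOn ℝ s v ↔ ∀ x ∈ s, ∀ y ∈ s, ∀ t ∈ Icc (0 : ℝ) 1,
      (1 - t) * v x + t * v y ≤ v (x + t * (y - x)) := by
  have combination (x y t : ℝ) : (1 - t) * x + t * y = x + t * (y - x) := by ring
  refine ⟨fun h x hx y hy t ht => ?_, fun h => ⟨hs, fun x hx y hy p q hp hq hpq => ?_⟩⟩
  · simpa only [smul_eq_mul, combination] using
      h.2 hx hy (sub_nonneg.2 ht.2) ht.1 (sub_add_cancel 1 t)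
  · obtain rfl : p = 1 - q := eq_sub_of_add_eq hpq
    simpa only [smul_eq_mul, combination] using h x hx y hy q ⟨hq, sub_nonneg.1 hp⟩

theorem concaveOn_closure {E : Type*} [AddCommGroup E] [Module ℝ E] [TopologicalSpace E]
    [IsTopologicalAddGroup E] [ContinuousConstSMul ℝ E] {s : Set E} {f : E → ℝ}
    (hf : ConcaveOn ℝ s f) (hc : ContinuousOn f (closure s)) : ConcaveOn ℝ (closure s) f := by
  refine ⟨hf.1.closure, fun x hx y hy p q hp hq hpq => ?_⟩
  have combination_mem : MapsTo (fun z : E × E => p • z.1 + q • z.2) (closure (s ×ˢ s))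
      (closure s) := fun z hz => by
    rw [closure_prod_eq] at hz
    exact hf.1.closure hz.1 hz.2 hp hq hpq
  have fst_mem : MapsTo Prod.fst (closure (s ×ˢ s)) (closure s) := fun z hz => by
    rw [closure_prod_eq] at hz; exact hz.1
  have snd_mem : MapsTo Prod.snd (closure (s ×ˢ s)) (closure s) := fun z hz => by
    rw [closure_prod_eq] at hz; exact hz.2
  refine le_on_closure (s := s ×ˢ s) (f := fun z => p • f z.1 + q • f z.2)
    (g := fun z => f (p • z.1 + q • z.2)) (fun z hz => hf.2 hz.1 hz.2 hp hq hpq) ?_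
    (hc.comp (by fun_prop) combination_mem) (x := (x, y))
    (by rw [closure_prod_eq]; exact ⟨hx, hy⟩)
  exact ((hc.comp continuousOn_fst fst_mem).const_smul p).add
    ((hc.comp continuousOn_snd snd_mem).const_smul q)

theorem concaveOn_of_tendsto {ι E : Type*} [AddCommGroup E] [Module ℝ E] {l : Filter ι} [l.NeBot]
    {s : Set E} {t : ι → Set E} {F : ι → E → ℝ} {f : E → ℝ} (hs : Convex ℝ s)
    (hF : ∀ᶠ i in l, ConcaveOn ℝ (t i) (F i)) (ht : ∀ x ∈ s, ∀ᶠ i in l, x ∈ t i)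
    (hlim : ∀ x ∈ s, Tendsto (F · x) l (𝓝 (f x))) : ConcaveOn ℝ s f := by
  refine ⟨hs, fun x hx y hy p q hp hq hpq => ?_⟩
  refine le_of_tendsto_of_tendsto (((hlim x hx).const_smul p).add ((hlim y hy).const_smul q))
    (hlim _ (hs hx hy hp hq hpq)) ?_
  filter_upwards [hF, ht x hx, ht y hy] with i hi hxi hyi using hi.2 hxi hyi hp hq hpq

theorem concaveOn_iff_deriv_deriv_nonpos {s : Set ℝ} {f : ℝ → ℝ} (hs : Convex ℝ s)
    (hs' : IsOpen s) (hf : ContDiff ℝ 2 f) :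
    ConcaveOn ℝ s f ↔ ∀ x ∈ s, deriv (deriv f) x ≤ 0 := by
  have hf₁ : Differentiable ℝ f := hf.differentiable two_ne_zero
  have hf₂ : Differentiable ℝ (deriv f) := (ContDiff.deriv' hf).differentiable one_ne_zero
  refine ⟨fun h x hx => ?_, fun h =>
    concaveOn_of_deriv2_nonpos' hs hf₁.differentiableOn hf₂.differentiableOn h⟩
  rw [← derivWithin_of_mem_nhds (hs'.mem_nhds hx)]
  exact (h.antitoneOn_deriv fun y _ => hf₁ y).derivWithin_nonpos

theorem concaveOn_convolution {E : Type*} [AddCommGroup E] [Module ℝ E]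
    [MeasurableSpace E] {μ : Measure E} {ρ v : E → ℝ} {s t : Set E} (ht : Convex ℝ t)
    (hv : ConcaveOn ℝ s v) (hρ : ∀ z, 0 ≤ ρ z) (hst : ∀ x ∈ t, ∀ z ∈ support ρ, x - z ∈ s)
    (hint : ∀ x ∈ t, ConvolutionExistsAt ρ v x (lsmul ℝ ℝ) μ) :
    ConcaveOn ℝ t (ρ ⋆[lsmul ℝ ℝ, μ] v) := by
  refine ⟨ht, fun x hx y hy p q hp hq hpq => ?_⟩
  simp only [convolution_def, smul_eq_mul, ← integral_const_mul]
  rw [← integral_add ((hint x hx).const_mul p) ((hint y hy).const_mul q)]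
  refine integral_mono (((hint x hx).const_mul p).add ((hint y hy).const_mul q))
    (hint _ (ht hx hy hp hq hpq)) fun z => ?_
  simp only [ContinuousLinearMap.lsmul_apply, smul_eq_mul]
  by_cases hz : z ∈ support ρ
  · have combination : p • (x - z) + q • (y - z) = p • x + q • y - z := by
      rw [smul_sub, smul_sub, sub_add_sub_comm, ← add_smul, hpq, one_smul]
    have := hv.2 (hst x hx z hz) (hst y hy z hz) hp hq hpq
    rw [combination, smul_eq_mul, smul_eq_mul] at this
    linarith [mul_le_mul_of_nonneg_left this (hρ z)]
  · simp [notMem_support.1 hz]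

theorem deriv_deriv_comp_const_sub (ρ : ℝ → ℝ) (x : ℝ) :
    deriv (deriv fun s => ρ (x - s)) = fun s => deriv (deriv ρ) (x - s) := by
  have deriv_comp : (deriv fun s => ρ (x - s)) = fun s => -deriv ρ (x - s) :=
    funext (deriv_comp_const_sub ρ x)
  funext s
  rw [deriv_comp, deriv.fun_neg, deriv_comp_const_sub, neg_neg]

theorem deriv_deriv_convolution {ρ v : ℝ → ℝ} (hρ : ContDiff ℝ 2 ρ) (hc : HasCompactSupport ρ)
    (hv : LocallyIntegrable v) (x : ℝ) :
    deriv (deriv (ρ ⋆[lsmul ℝ ℝ, volume] v)) x =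
      ∫ s, deriv (deriv fun s => ρ (x - s)) s * v s := by
  have first : deriv (ρ ⋆[lsmul ℝ ℝ, volume] v) = deriv ρ ⋆[lsmul ℝ ℝ, volume] v :=
    funext fun y => (hc.hasDerivAt_convolution_left _ (hρ.of_le one_le_two) hv y).deriv
  rw [first, (hc.deriv.hasDerivAt_convolution_left _ (ContDiff.deriv' hρ) hv x).deriv,
    convolution_eq_swap, deriv_deriv_comp_const_sub]
  simp only [ContinuousLinearMap.lsmul_apply, smul_eq_mul]

theorem exists_contDiff_two_deriv_deriv_eq {f : ℝ → ℝ} (hf : Continuous f) :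
    ∃ F : ℝ → ℝ, ContDiff ℝ 2 F ∧ deriv (deriv F) = f := by
  have antideriv {g : ℝ → ℝ} (hg : Continuous g) (x : ℝ) :
      HasDerivAt (fun y => ∫ s in (0 : ℝ)..y, g s) (g x) x :=
    (hg.integral_hasStrictDerivAt 0 x).hasDerivAt
  set F₁ : ℝ → ℝ := fun y => ∫ s in (0 : ℝ)..y, f s
  have deriv_F₁ : deriv F₁ = f := funext fun x => (antideriv hf x).deriv
  have hF₁ : ContDiff ℝ 1 F₁ := contDiff_one_iff_deriv.2
    ⟨fun x => (antideriv hf x).differentiableAt, deriv_F₁ ▸ hf⟩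
  have deriv_F : deriv (fun y => ∫ s in (0 : ℝ)..y, F₁ s) = F₁ :=
    funext fun x => (antideriv hF₁.continuous x).deriv
  refine ⟨fun y => ∫ s in (0 : ℝ)..y, F₁ s, ?_, by rw [deriv_F, deriv_F₁]⟩
  exact (contDiff_succ_iff_deriv (n := 1)).2
    ⟨fun x => (antideriv hF₁.continuous x).differentiableAt, by simp, by rwa [deriv_F]⟩

theorem integral_deriv_mul_eq_neg_integral_mul_deriv {φ F : ℝ → ℝ} {a b : ℝ}
    (hφ : ContDiff ℝ 1 φ) (hF : ContDiff ℝ 1 F) (ha : φ a = 0) (hb : φ b = 0) :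
    ∫ x in a..b, deriv φ x * F x = -∫ x in a..b, φ x * deriv F x := by
  have parts := intervalIntegral.integral_mul_deriv_eq_deriv_mul
    (fun x _ => (hφ.differentiable one_ne_zero x).hasDerivAt)
    (fun x _ => (hF.differentiable one_ne_zero x).hasDerivAt)
    (hφ.continuous_deriv_one.intervalIntegrable a b)
    (hF.continuous_deriv_one.intervalIntegrable a b)
  rw [parts, ha, hb]
  ring

theorem integral_deriv_deriv_mul_eq {φ F : ℝ → ℝ} {a b : ℝ} (hφ : ContDiff ℝ 2 φ)
    (hF : ContDiff ℝ 2 F) (hs : tsupport φ ⊆ Ioo a b) :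
    ∫ x in a..b, deriv (deriv φ) x * F x = ∫ x in a..b, φ x * deriv (deriv F) x := by
  have φ_eq_zero {x : ℝ} (hx : x ∉ Ioo a b) : φ x = 0 :=
    image_eq_zero_of_notMem_tsupport fun h => hx (hs h)
  have deriv_φ_eq_zero {x : ℝ} (hx : x ∉ Ioo a b) : deriv φ x = 0 :=
    image_eq_zero_of_notMem_tsupport fun h => hx (hs (tsupport_deriv_subset h))
  have ha : a ∉ Ioo a b := fun h => lt_irrefl a h.1
  have hb : b ∉ Ioo a b := fun h => lt_irrefl b h.2
  rw [integral_deriv_mul_eq_neg_integral_mul_deriv (ContDiff.deriv' hφ) (hF.of_le one_le_two)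
      (deriv_φ_eq_zero ha) (deriv_φ_eq_zero hb),
    integral_deriv_mul_eq_neg_integral_mul_deriv (hφ.of_le one_le_two) (ContDiff.deriv' hF)
      (φ_eq_zero ha) (φ_eq_zero hb), neg_neg]

theorem integral_affine_mul_deriv_deriv {G : ℝ → ℝ} (hG : ContDiff ℝ 2 G) (α β p q : ℝ) :
    ∫ r in p..q, (α + β * r) * deriv (deriv G) r =
      ((α + β * q) * deriv G q - β * G q) - ((α + β * p) * deriv G p - β * G p) := by
  have hG₁ : ContDiff ℝ 1 (deriv G) := ContDiff.deriv' hG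
  refine intervalIntegral.integral_eq_sub_of_hasDerivAt
    (f := fun r => (α + β * r) * deriv G r - β * G r) (fun r _ => ?_)
    (Continuous.intervalIntegrable (.mul (by fun_prop) hG₁.continuous_deriv_one) _ _)
  have weight : HasDerivAt (fun r => α + β * r) β r := by
    simpa using ((hasDerivAt_id r).const_mul β).const_add α
  refine ((weight.mul (hG₁.differentiable one_ne_zero r).hasDerivAt).sub
    ((hG.differentiable two_ne_zero r).hasDerivAt.const_mul β)).congr_deriv ?_
  ring

/-- The Green function of `-d²/ds²` on `[0, 1]` with Dirichlet boundary conditions. -/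
def greenFunction (s t : ℝ) : ℝ := min s t * (1 - max s t)

namespace greenFunction

theorem continuous_left (t : ℝ) : Continuous fun r => greenFunction r t := by
  unfold greenFunction
  fun_prop

theorem eq_of_le {s t : ℝ} (h : s ≤ t) : greenFunction s t = s * (1 - t) := by
  rw [greenFunction, min_eq_left h, max_eq_right h]

theorem eq_of_ge {s t : ℝ} (h : t ≤ s) : greenFunction s t = t * (1 - s) := by
  rw [greenFunction, min_eq_right h, max_eq_left h]

theorem integral_mul_deriv_deriv {G : ℝ → ℝ} (hG : ContDiff ℝ 2 G) {t : ℝ}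
    (ht : t ∈ Icc (0 : ℝ) 1) :
    ∫ r in (0 : ℝ)..1, greenFunction r t * deriv (deriv G) r =
      (1 - t) * G 0 + t * G 1 - G t := by
  have hint (p q : ℝ) :
      IntervalIntegrable (fun r => greenFunction r t * deriv (deriv G) r) volume p q :=
    ((continuous_left t).mul (ContDiff.deriv' hG).continuous_deriv_one).intervalIntegrable p q
  have left : ∫ r in (0 : ℝ)..t, greenFunction r t * deriv (deriv G) r =
      ∫ r in (0 : ℝ)..t, (0 + (1 - t) * r) * deriv (deriv G) r :=
    intervalIntegral.integral_congr fun r hr => by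
      rw [uIcc_of_le ht.1] at hr
      simp only [eq_of_le hr.2]
      ring
  have right : ∫ r in t..1, greenFunction r t * deriv (deriv G) r =
      ∫ r in t..1, (t + -t * r) * deriv (deriv G) r :=
    intervalIntegral.integral_congr fun r hr => by
      rw [uIcc_of_le ht.2] at hr
      simp only [eq_of_ge hr.1]
      ring
  rw [← intervalIntegral.integral_add_adjacent_intervals (hint 0 t) (hint t 1), left, right,
    integral_affine_mul_deriv_deriv hG, integral_affine_mul_deriv_deriv hG]
  ring

end greenFunction

theorem deriv_deriv_comp_add_mul_const (F : ℝ → ℝ) (x c : ℝ) :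
    deriv (deriv fun r => F (x + r * c)) = fun r => c ^ 2 * deriv (deriv F) (x + r * c) := by
  have deriv_comp (H : ℝ → ℝ) :
      (deriv fun r => H (x + r * c)) = fun r => c * deriv H (x + r * c) := by
    funext r
    simpa only [mul_comm c, smul_eq_mul, deriv_comp_const_add] using
      deriv_comp_mul_left c (fun z => H (x + z)) r
  rw [deriv_comp F]
  funext r
  rw [deriv_const_mul_field, deriv_comp (deriv F)]
  ring

/-- `φ` is a nonnegative element of `C_c^∞((a, b))`, regarded as a function on all of `ℝ`. -/
def IsNonnegTestFunction (a b : ℝ) (φ : ℝ → ℝ) : Prop :=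
  ContDiff ℝ (⊤ : ℕ∞) φ ∧ HasCompactSupport φ ∧ tsupport φ ⊆ Ioo a b ∧ ∀ x, 0 ≤ φ x

/-- The inequality `u'' + f ≤ 0` on `(a, b)` in the sense of distributions. -/
def IsDistribSupersolution (a b : ℝ) (u f : ℝ → ℝ) : Prop :=
  ∀ φ, IsNonnegTestFunction a b φ →
    ∫ x in a..b, deriv (deriv φ) x * u x ≤ -∫ x in a..b, φ x * f x

/-- The inequality `u'' + f ≤ 0` in integrated form: along every affine path `γ` from `x` to `y`
in `[a, b]`, with speed `θ = |y - x|`, `u ∘ γ` lies above the solution `w` of `w'' + θ² f ∘ γ = 0`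
with the same boundary values. -/
def IsGreenSupersolution (a b : ℝ) (u f : ℝ → ℝ) : Prop :=
  ∀ x ∈ Icc a b, ∀ y ∈ Icc a b, ∀ t ∈ Icc (0 : ℝ) 1,
    (1 - t) * u x + t * u y +
        ∫ r in (0 : ℝ)..1, greenFunction r t * ((y - x) ^ 2 * f (x + r * (y - x))) ≤
      u (x + t * (y - x))

theorem isNonnegTestFunction_comp_const_sub {a b x : ℝ} {ρ : ℝ → ℝ}
    (hρ : ContDiff ℝ (⊤ : ℕ∞) ρ) (hc : HasCompactSupport ρ) (h0 : ∀ z, 0 ≤ ρ z)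
    (hs : ∀ z ∈ tsupport ρ, x - z ∈ Ioo a b) :
    IsNonnegTestFunction a b fun s => ρ (x - s) := by
  refine ⟨hρ.comp (contDiff_const.sub contDiff_id),
    hc.comp_homeomorph (Homeomorph.subLeft x), fun s hx => ?_, fun s => h0 _⟩
  have := hs _ (tsupport_comp_subset_preimage ρ (continuous_const.sub continuous_id) hx)
  simpa using this

theorem integral_deriv_deriv_mul_of_tsupport_subset {a b : ℝ} {φ : ℝ → ℝ}
    (hφ : tsupport φ ⊆ Ioo a b) (v : ℝ → ℝ) :
    ∫ x in a..b, deriv (deriv φ) x * v x = ∫ x, deriv (deriv φ) x * v x := by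
  have support_subset : support (deriv (deriv φ)) ⊆ Ioc a b :=
    support_deriv_subset.trans (tsupport_deriv_subset.trans (hφ.trans Ioo_subset_Ioc_self))
  exact intervalIntegral.integral_eq_integral_of_support_subset fun x hx =>
    support_subset (left_ne_zero_of_mul hx)

namespace IsDistribSupersolution

theorem integral_nonpos {a b : ℝ} {φ v : ℝ → ℝ} (h : IsDistribSupersolution a b v 0)
    (hφ : IsNonnegTestFunction a b φ) : ∫ x, deriv (deriv φ) x * v x ≤ 0 := by
  simpa [integral_deriv_deriv_mul_of_tsupport_subset hφ.2.2.1] using h φ hφ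

theorem concaveOn_mollification {a b ε : ℝ} {ρ v : ℝ → ℝ} (h : IsDistribSupersolution a b v 0)
    (hv : LocallyIntegrable v) (hρ : ContDiff ℝ (⊤ : ℕ∞) ρ) (hc : HasCompactSupport ρ)
    (h0 : ∀ z, 0 ≤ ρ z) (hs : tsupport ρ ⊆ Metric.closedBall 0 ε) :
    ConcaveOn ℝ (Ioo (a + ε) (b - ε)) (ρ ⋆[lsmul ℝ ℝ, volume] v) := by
  have hρ₂ : ContDiff ℝ 2 ρ := contDiff_infty.1 hρ 2
  refine (concaveOn_iff_deriv_deriv_nonpos (convex_Ioo _ _) isOpen_Ioo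
    (hc.contDiff_convolution_left (n := 2) _ hρ₂ hv)).2 fun x hx => ?_
  rw [deriv_deriv_convolution hρ₂ hc hv]
  refine h.integral_nonpos (isNonnegTestFunction_comp_const_sub hρ hc h0 fun z hz => ?_)
  obtain ⟨hz₁, hz₂⟩ := abs_le.1 (mem_closedBall_zero_iff.1 (hs hz))
  exact ⟨by linarith [hx.1], by linarith [hx.2]⟩

theorem concaveOn_Ioo {a b : ℝ} {v : ℝ → ℝ} (h : IsDistribSupersolution a b v 0)
    (hv : LocallyIntegrable v) (hcont : ContinuousOn v (Ioo a b)) :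
    ConcaveOn ℝ (Ioo a b) v := by
  let bump (n : ℕ) : ContDiffBump (0 : ℝ) :=
    { rIn := 1 / ((n : ℝ) + 1) / 2
      rOut := 1 / ((n : ℝ) + 1)
      rIn_pos := by positivity
      rIn_lt_rOut := half_lt_self (by positivity) }
  have rOut_tendsto : Tendsto (fun n => (bump n).rOut) atTop (𝓝 0) :=
    tendsto_one_div_add_atTop_nhds_zero_nat
  refine concaveOn_of_tendsto (l := atTop)
    (t := fun n => Ioo (a + (bump n).rOut) (b - (bump n).rOut))
    (F := fun n => (bump n).normed volume ⋆[lsmul ℝ ℝ, volume] v) (convex_Ioo a b)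
    (Eventually.of_forall fun n => ?_) (fun x hx => ?_) fun x hx => ?_
  · exact h.concaveOn_mollification hv (bump n).contDiff_normed (bump n).hasCompactSupport_normed
      (bump n).nonneg_normed (bump n).tsupport_normed_eq.le
  · filter_upwards [rOut_tendsto.eventually_lt_const (sub_pos.2 hx.1),
      rOut_tendsto.eventually_lt_const (sub_pos.2 hx.2)] with n hn₁ hn₂
    exact ⟨by linarith, by linarith⟩
  · have hvx : Tendsto v (𝓝 x) (𝓝 (v x)) := hcont.continuousAt (isOpen_Ioo.mem_nhds hx)
    exact ContDiffBump.convolution_tendsto_right rOut_tendsto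
      (Eventually.of_forall fun _ => hv.aestronglyMeasurable) (hvx.comp tendsto_snd)
      tendsto_const_nhds

theorem of_concaveOn {a b : ℝ} {v : ℝ → ℝ} (h : ConcaveOn ℝ (Ioo a b) v)
    (hv : LocallyIntegrable v) : IsDistribSupersolution a b v 0 := by
  rintro φ ⟨hφ, hc, hs, h0⟩
  obtain ⟨δ, hδ, thickening_subset⟩ := hc.exists_thickening_subset_open isOpen_Ioo hs
  set ρ : ℝ → ℝ := fun s => φ (0 - s) with hρ_def
  have hρ : ContDiff ℝ 2 ρ :=
    ContDiff.comp (contDiff_infty.1 hφ 2) (contDiff_const.sub contDiff_id)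
  have hρc : HasCompactSupport ρ := hc.comp_homeomorph (Homeomorph.subLeft 0)
  have concave : ConcaveOn ℝ (Metric.ball 0 δ) (ρ ⋆[lsmul ℝ ℝ, volume] v) := by
    refine concaveOn_convolution (convex_ball 0 δ) h (fun z => h0 _) (fun x hx z hz => ?_)
      fun x _ => hρc.convolutionExists_left _ hρ.continuous hv x
    refine thickening_subset (Metric.mem_thickening_iff.2 ⟨0 - z, subset_tsupport φ hz, ?_⟩)
    simpa [Real.dist_eq] using hx
  have second_deriv_nonpos := (concaveOn_iff_deriv_deriv_nonpos (convex_ball 0 δ)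
    Metric.isOpen_ball (hρc.contDiff_convolution_left (n := 2) _ hρ hv)).1 concave 0
    (Metric.mem_ball_self hδ)
  rw [deriv_deriv_convolution hρ hρc hv] at second_deriv_nonpos
  simpa [hρ_def, integral_deriv_deriv_mul_of_tsupport_subset hs] using second_deriv_nonpos

theorem zero_iff_concaveOn {a b : ℝ} (hab : a < b) {v : ℝ → ℝ} (hv : Continuous v) :
    IsDistribSupersolution a b v 0 ↔ ConcaveOn ℝ (Icc a b) v := by
  refine ⟨fun h => ?_, fun h =>
    of_concaveOn (h.subset Ioo_subset_Icc_self (convex_Ioo a b)) hv.locallyIntegrable⟩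
  rw [← closure_Ioo hab.ne]
  exact concaveOn_closure (h.concaveOn_Ioo hv.locallyIntegrable hv.continuousOn) hv.continuousOn

theorem deriv_deriv_iff {a b : ℝ} {u F : ℝ → ℝ} (hu : Continuous u) (hF : ContDiff ℝ 2 F) :
    IsDistribSupersolution a b u (deriv (deriv F)) ↔ IsDistribSupersolution a b (u + F) 0 := by
  refine forall₂_congr fun φ hφ => ?_
  have hφ₂ : ContDiff ℝ 2 φ := contDiff_infty.1 hφ.1 2
  have hφ'' : Continuous (deriv (deriv φ)) := (ContDiff.deriv' hφ₂).continuous_deriv_one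
  simp only [Pi.add_apply, mul_add, Pi.zero_apply, mul_zero, intervalIntegral.integral_zero,
    neg_zero]
  rw [intervalIntegral.integral_add ((hφ''.fun_mul hu).intervalIntegrable a b)
    ((hφ''.fun_mul hF.continuous).intervalIntegrable a b),
    integral_deriv_deriv_mul_eq hφ₂ hF hφ.2.2.1, le_neg_iff_add_nonpos_right]

theorem congr {a b : ℝ} (hab : a ≤ b) {u u' f f' : ℝ → ℝ} (hu : EqOn u u' (Icc a b))
    (hf : EqOn f f' (Icc a b)) :
    IsDistribSupersolution a b u f ↔ IsDistribSupersolution a b u' f' := by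
  rw [← uIcc_of_le hab] at hu hf
  refine forall₂_congr fun φ _ => ?_
  rw [intervalIntegral.integral_congr fun x hx => congrArg (deriv (deriv φ) x * ·) (hu hx),
    intervalIntegral.integral_congr fun x hx => congrArg (φ x * ·) (hf hx)]

end IsDistribSupersolution

namespace IsGreenSupersolution

theorem deriv_deriv_iff_concaveOn {a b : ℝ} {u F : ℝ → ℝ} (hF : ContDiff ℝ 2 F) :
    IsGreenSupersolution a b u (deriv (deriv F)) ↔ ConcaveOn ℝ (Icc a b) (u + F) := by
  rw [concaveOn_iff_forall_lineSegment_le (convex_Icc a b)]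
  refine forall₂_congr fun x _ => forall₂_congr fun y _ => forall₂_congr fun t ht => ?_
  have green := greenFunction.integral_mul_deriv_deriv
    (hF.comp (by fun_prop : ContDiff ℝ 2 fun r => x + r * (y - x))) ht
  simp only [comp_def, deriv_deriv_comp_add_mul_const, zero_mul, add_zero, one_mul,
    add_sub_cancel] at green
  simp only [green, Pi.add_apply]
  constructor <;> intro h <;> linarith

theorem congr {a b : ℝ} {u u' f f' : ℝ → ℝ} (hu : EqOn u u' (Icc a b))
    (hf : EqOn f f' (Icc a b)) :
    IsGreenSupersolution a b u f ↔ IsGreenSupersolution a b u' f' := by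
  refine forall₂_congr fun x hx => forall₂_congr fun y hy => forall₂_congr fun t ht => ?_
  have path_mem {r : ℝ} (hr : r ∈ Icc (0 : ℝ) 1) : x + r * (y - x) ∈ Icc a b :=
    (convex_Icc a b).add_smul_sub_mem hx hy hr
  rw [hu hx, hu hy, hu (path_mem ht), intervalIntegral.integral_congr fun r hr =>
    congrArg (fun z => greenFunction r t * ((y - x) ^ 2 * z))
      (hf (path_mem (uIcc_of_le (zero_le_one' ℝ) ▸ hr)))]

end IsGreenSupersolution

theorem exists_continuous_eqOn_Icc {α β : Type*} [LinearOrder α] [TopologicalSpace α]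
    [OrderTopology α] [TopologicalSpace β] {a b : α} (hab : a ≤ b) {f : α → β}
    (hf : ContinuousOn f (Icc a b)) : ∃ g : α → β, Continuous g ∧ EqOn f g (Icc a b) :=
  ⟨IccExtend hab ((Icc a b).domRestrict f), hf.domRestrict.Icc_extend',
    fun _ hx => (IccExtend_of_mem hab ((Icc a b).domRestrict f) hx).symm⟩

theorem distributional_iff_green_general {a b : ℝ} (hab : a < b) {u f : ℝ → ℝ}
    (hf : ContinuousOn f (Icc a b)) (hu : ContinuousOn u (Icc a b)) :
    IsDistribSupersolution a b u f ↔ IsGreenSupersolution a b u f := by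
  obtain ⟨U, hU, u_eq⟩ := exists_continuous_eqOn_Icc hab.le hu
  obtain ⟨f', hf', f_eq⟩ := exists_continuous_eqOn_Icc hab.le hf
  obtain ⟨F, hF, rfl⟩ := exists_contDiff_two_deriv_deriv_eq hf'
  rw [IsDistribSupersolution.congr hab.le u_eq f_eq, IsGreenSupersolution.congr u_eq f_eq,
    IsDistribSupersolution.deriv_deriv_iff hU hF, IsGreenSupersolution.deriv_deriv_iff_concaveOn hF,
    IsDistribSupersolution.zero_iff_concaveOn hab (hU.add hF.continuous)]

/-- Equivalence of the distributional inequality `u'' + κu ≤ 0` and the Green-function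
integral inequality along constant speed geodesics of `[a,b]`. -/
theorem distributional_iff_green (a b : ℝ) (hab : a < b)
    (κ u : ℝ → ℝ) (hκ : ContinuousOn κ (Icc a b))
    (hu : ContinuousOn u (Icc a b)) (hunn : ∀ x ∈ Icc a b, 0 ≤ u x) :
    (∀ φ : ℝ → ℝ, ContDiff ℝ (⊤ : ℕ∞) φ → HasCompactSupport φ → tsupport φ ⊆ Ioo a b →
        (∀ x, 0 ≤ φ x) →
        (∫ x in a..b, deriv (deriv φ) x * u x) ≤ -∫ x in a..b, φ x * κ x * u x) ↔
      (∀ x ∈ Icc a b, ∀ y ∈ Icc a b, ∀ t ∈ Icc (0:ℝ) 1,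
        (1 - t) * u x + t * u y +
            (∫ r in (0:ℝ)..1,
              (min r t * (1 - max r t)) * κ (x + r * (y - x)) * (y - x) ^ 2 *
                u (x + r * (y - x))) ≤
          u (x + t * (y - x))) := by
  simpa only [IsDistribSupersolution, IsNonnegTestFunction, IsGreenSupersolution, greenFunction,
    and_imp, Pi.mul_apply, mul_assoc, mul_left_comm (_ ^ 2)] using
    distributional_iff_green_general hab (hκ.mul hu) hu
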